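/- A set X ⊆ ℕ is small if and only if its upper Buck density 𝔟*(X) is zero. -/

import Mathlib

open Set Filter Topology

/-- An upper quasi-density on ℕ. -/
def IsUpperQuasiDensity (μ : Set ℕ → ℝ) : Prop :=
  μ Set.univ = 1 ∧
  (∀ X : Set ℕ, μ X ≤ 1) ∧
  (∀ X Y : Set ℕ, μ (X ∪ Y) ≤ μ X + μ Y) ∧
  (∀ (X : Set ℕ) (k : ℕ), 0 < k → μ ((fun x => k * x) '' X) = μ X / k) ∧
  (∀ (X : Set ℕ) (h : ℕ), μ ((fun x => x + h) '' X) = μ X)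

/-- An upper density on ℕ: a monotone upper quasi-density. -/
def IsUpperDensity (μ : Set ℕ → ℝ) : Prop :=
  IsUpperQuasiDensity μ ∧ ∀ X Y : Set ℕ, X ⊆ Y → μ X ≤ μ Y

/-- A set of naturals is small if every upper quasi-density vanishes on it. -/
def SmallSet (X : Set ℕ) : Prop :=
  ∀ μ : Set ℕ → ℝ, IsUpperQuasiDensity μ → μ X = 0

/-- The upper asymptotic density of a set of naturals. -/
noncomputable def upperAsymptoticDensity (X : Set ℕ) : ℝ :=
  limsup (fun n : ℕ => ((X ∩ Set.Icc 1 n).ncard : ℝ) / n) atTop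

/-- The arithmetic progression k·ℕ + h. -/
def AP (k h : ℕ) : Set ℕ := {x : ℕ | ∃ m : ℕ, x = k * m + h}

/-- A finite union of arithmetic progressions of ℕ. -/
def IsFinUnionAP (A : Set ℕ) : Prop :=
  ∃ s : Finset (ℕ × ℕ), (∀ p ∈ s, 0 < p.1) ∧ A = ⋃ p ∈ s, AP p.1 p.2

/-- The upper Buck density of a set of naturals. -/
noncomputable def buckDensity (X : Set ℕ) : ℝ :=
  sInf {d : ℝ | ∃ A : Set ℕ, IsFinUnionAP A ∧ X ⊆ A ∧ d = upperAsymptoticDensity A}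

/-- `rk k X` is the number of residues h ∈ [0, k-1] with X ∩ (k·ℕ + h) ≠ ∅. -/
noncomputable def rk (k : ℕ) (X : Set ℕ) : ℕ :=
  {h : ℕ | h < k ∧ (X ∩ AP k h).Nonempty}.ncard

/-- `wk μ k S` is the number of residues h ∈ [0, k-1] with μ(S ∩ (k·ℕ + h)) ≠ 0. -/
noncomputable def wk (μ : Set ℕ → ℝ) (k : ℕ) (S : Set ℕ) : ℕ :=
  {h : ℕ | h < k ∧ μ (S ∩ AP k h) ≠ 0}.ncard

/-! For `k` ranging over the positive integers ordered by divisibility, `rk k X / k` is decreasing,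
since it is the density of the union of the residue classes modulo `k` that meet `X`. A finite
union of progressions is closed under adding a common multiple `k` of the moduli, hence differs
from a union of residue classes modulo `k` by a finite set only. So `buckDensity X` is the limit
of `rk k X / k` along divisibility, and each axiom of an upper quasi-density passes to this limit.
Every upper quasi-density is at most `rk k X / k`: cut `X` into its residue classes modulo `k`,
each of which is a translate of a dilate by `k` of some set. Thus `buckDensity` is the greatest
upper quasi-density. -/

section Residues

variable {k : ℕ}

lemma AP_eq_range (k h : ℕ) : AP k h = range fun m => k * m + h := by
  ext x
  simp only [AP, mem_ofPred_eq, mem_range, eq_comm]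

lemma mapsTo_add_AP {l : ℕ} (hkl : k ∣ l) (h : ℕ) : MapsTo (· + l) (AP k h) (AP k h) := by
  obtain ⟨c, rfl⟩ := hkl
  rintro _ ⟨m, rfl⟩
  exact ⟨m + c, by ring⟩

lemma mem_AP_iff_mod_eq {h : ℕ} (hlt : h < k) {x : ℕ} : x ∈ AP k h ↔ x % k = h := by
  constructor
  · rintro ⟨m, rfl⟩
    rw [Nat.mul_add_mod, Nat.mod_eq_of_lt hlt]
  · rintro rfl
    exact ⟨x / k, (Nat.div_add_mod x k).symm⟩

open Classical in
/-- The residues modulo `k` of the elements of `X`, as a `Finset`: the set counted by `rk k X`. -/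
noncomputable def hitResidues (k : ℕ) (X : Set ℕ) : Finset ℕ :=
  {h ∈ Finset.range k | (X ∩ AP k h).Nonempty}

lemma card_hitResidues (k : ℕ) (X : Set ℕ) : (hitResidues k X).card = rk k X := by
  rw [rk, ← Set.ncard_coe_finset]
  congr 1
  ext h
  simp [hitResidues]

lemma mem_hitResidues {X : Set ℕ} {h : ℕ} :
    h ∈ hitResidues k X ↔ h < k ∧ (X ∩ AP k h).Nonempty := by
  simp [hitResidues]

lemma mem_hitResidues_iff_exists_mod_eq (hk : 0 < k) {X : Set ℕ} {h : ℕ} :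
    h ∈ hitResidues k X ↔ ∃ x ∈ X, x % k = h := by
  rw [mem_hitResidues]
  constructor
  · rintro ⟨hlt, x, hx, hxh⟩
    exact ⟨x, hx, (mem_AP_iff_mod_eq hlt).1 hxh⟩
  · rintro ⟨x, hx, rfl⟩
    have hlt := Nat.mod_lt x hk
    exact ⟨hlt, x, hx, (mem_AP_iff_mod_eq hlt).2 rfl⟩

lemma iUnion_hitResidues_inter_AP (hk : 0 < k) (X : Set ℕ) :
    ⋃ h ∈ hitResidues k X, X ∩ AP k h = X := by
  refine Subset.antisymm (iUnion₂_subset fun _ _ => inter_subset_left) fun x hx => ?_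
  exact mem_iUnion₂.2 ⟨x % k, (mem_hitResidues_iff_exists_mod_eq hk).2 ⟨x, hx, rfl⟩, hx,
    (mem_AP_iff_mod_eq (Nat.mod_lt x hk)).2 rfl⟩

lemma pairwiseDisjoint_AP (k : ℕ) : (Iio k).PairwiseDisjoint (AP k) := by
  refine fun h hh h' hh' hne => Set.disjoint_left.2 fun x hx hx' => hne ?_
  rw [← (mem_AP_iff_mod_eq hh).1 hx, (mem_AP_iff_mod_eq hh').1 hx']

end Residues

section ResidueCount

variable {k : ℕ}

lemma rk_eq_ncard_image_mod (hk : 0 < k) (X : Set ℕ) : rk k X = ((· % k) '' X).ncard := by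
  rw [← card_hitResidues, ← Set.ncard_coe_finset]
  congr 1
  ext h
  simp [mem_hitResidues_iff_exists_mod_eq hk]

lemma rk_mono (k : ℕ) {X Y : Set ℕ} (hXY : X ⊆ Y) : rk k X ≤ rk k Y :=
  ncard_le_ncard (fun _ hh => ⟨hh.1, hh.2.mono (inter_subset_inter_left _ hXY)⟩)
    ((finite_Iio k).subset fun _ hh => hh.1)

lemma rk_univ (k : ℕ) : rk k univ = k := by
  have h : {h : ℕ | h < k ∧ (univ ∩ AP k h).Nonempty} = Finset.range k := by
    ext h
    simpa using fun _ => ⟨h, 0, by simp⟩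
  rw [rk, h, ncard_coe_finset, Finset.card_range]

lemma rk_le (k : ℕ) (X : Set ℕ) : rk k X ≤ k :=
  (rk_mono k (subset_univ X)).trans_eq (rk_univ k)

lemma rk_union_le (k : ℕ) (X Y : Set ℕ) : rk k (X ∪ Y) ≤ rk k X + rk k Y := by
  have h : {h : ℕ | h < k ∧ ((X ∪ Y) ∩ AP k h).Nonempty} =
      {h | h < k ∧ (X ∩ AP k h).Nonempty} ∪ {h | h < k ∧ (Y ∩ AP k h).Nonempty} := by
    ext h
    simp only [union_inter_distrib_right, union_nonempty, mem_ofPred_eq, mem_union, and_or_left]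
  rw [rk, h]
  exact ncard_union_le _ _

lemma rk_image_add (hk : 0 < k) (X : Set ℕ) (h : ℕ) : rk k ((· + h) '' X) = rk k X := by
  have himage : (· % k) '' ((· + h) '' X) = (fun r => (r + h) % k) '' ((· % k) '' X) := by
    simp only [image_image, Nat.mod_add_mod]
  rw [rk_eq_ncard_image_mod hk, rk_eq_ncard_image_mod hk, himage]
  refine InjOn.ncard_image ?_
  rintro _ ⟨x, _, rfl⟩ _ ⟨y, _, rfl⟩ hxy
  have hmod : x % k ≡ y % k [MOD k] := Nat.ModEq.add_right_cancel' h hxy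
  simpa [Nat.ModEq] using hmod

lemma rk_mul_image_mul {m : ℕ} (hm : 0 < m) (hk : 0 < k) (X : Set ℕ) :
    rk (m * k) ((m * ·) '' X) = rk k X := by
  have himage : (· % (m * k)) '' ((m * ·) '' X) = (m * ·) '' ((· % k) '' X) := by
    simp only [image_image, Nat.mul_mod_mul_left]
  rw [rk_eq_ncard_image_mod (Nat.mul_pos hm hk), rk_eq_ncard_image_mod hk, himage]
  exact ncard_image_of_injective _ (mul_right_injective₀ hm.ne')

end ResidueCount

section Density

/-- `A` has asymptotic density `d`, the counting function being that of `upperAsymptoticDensity`. -/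
def HasAsymptoticDensity (A : Set ℕ) (d : ℝ) : Prop :=
  Tendsto (fun n : ℕ => ((A ∩ Icc 1 n).ncard : ℝ) / n) atTop (𝓝 d)

lemma HasAsymptoticDensity.upperAsymptoticDensity_eq {A : Set ℕ} {d : ℝ}
    (hA : HasAsymptoticDensity A d) : upperAsymptoticDensity A = d :=
  hA.limsup_eq

lemma HasAsymptoticDensity.biUnion {ι : Type*} {s : Finset ι} {A : ι → Set ℕ} {d : ι → ℝ}
    (hdisj : (s : Set ι).PairwiseDisjoint A) (hA : ∀ i ∈ s, HasAsymptoticDensity (A i) (d i)) :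
    HasAsymptoticDensity (⋃ i ∈ s, A i) (∑ i ∈ s, d i) := by
  classical
  refine (tendsto_finsetSum s hA).congr fun n => ?_
  have hcoe (i : ι) : A i ∩ Icc 1 n = ({x ∈ Finset.Icc 1 n | x ∈ A i} : Finset ℕ) := by
    ext x
    simp only [mem_inter_iff, mem_Icc, Finset.coe_filter, Finset.mem_Icc, mem_ofPred_eq, and_comm]
  have hunion : (⋃ i ∈ s, A i) ∩ Icc 1 n =
      (s.biUnion fun i => {x ∈ Finset.Icc 1 n | x ∈ A i} : Finset ℕ) := by
    simp only [Finset.coe_biUnion, ← hcoe, iUnion₂_inter, Finset.mem_coe]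
  rw [hunion, ncard_coe_finset, Finset.card_biUnion]
  · simp only [hcoe, ncard_coe_finset, Nat.cast_sum, Finset.sum_div]
  · exact fun i hi j hj hij => Finset.disjoint_filter.2 fun x _ hx hx' =>
      Set.disjoint_left.1 (hdisj hi hj hij) hx hx'

lemma hasAsymptoticDensity_of_abs_sub_le {A : Set ℕ} {d C : ℝ}
    (hA : ∀ n : ℕ, |((A ∩ Icc 1 n).ncard : ℝ) - d * n| ≤ C) : HasAsymptoticDensity A d := by
  refine tendsto_iff_dist_tendsto_zero.2 <| squeeze_zero' (.of_forall fun _ => dist_nonneg) ?_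
    (tendsto_const_div_atTop_nhds_zero_nat C)
  filter_upwards [eventually_gt_atTop 0] with n hn
  have hn' : (0 : ℝ) < n := Nat.cast_pos.2 hn
  calc dist (((A ∩ Icc 1 n).ncard : ℝ) / n) d
      = |((A ∩ Icc 1 n).ncard - d * n) / n| := by rw [Real.dist_eq]; congr 1; field_simp
    _ = |((A ∩ Icc 1 n).ncard : ℝ) - d * n| / n := by rw [abs_div, abs_of_pos hn']
    _ ≤ C / n := by gcongr; exact hA n

variable {k : ℕ}

lemma div_le_ncard_AP_inter_Icc (hk : 0 < k) (h n : ℕ) :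
    (n - h) / k ≤ (AP k h ∩ Icc 1 n).ncard := by
  have hsub : (fun m => k * m + h) '' Icc 1 ((n - h) / k) ⊆ AP k h ∩ Icc 1 n := by
    rintro _ ⟨m, ⟨hm, hmn⟩, rfl⟩
    have hmul : k * m ≤ n - h := by
      rw [mul_comm]
      exact (Nat.le_div_iff_mul_le hk).1 hmn
    have hpos : 0 < k * m := Nat.mul_pos hk hm
    exact ⟨⟨m, rfl⟩, by dsimp only; omega, by dsimp only; omega⟩
  have hinj : Function.Injective fun m => k * m + h := fun a b hab =>
    Nat.eq_of_mul_eq_mul_left hk (Nat.add_right_cancel hab)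
  simpa [ncard_image_of_injective _ hinj] using
    ncard_le_ncard hsub ((finite_Icc 1 n).inter_of_right _)

lemma ncard_AP_inter_Icc_le (hk : 0 < k) (h n : ℕ) :
    (AP k h ∩ Icc 1 n).ncard ≤ n / k + 1 := by
  have hsub : AP k h ∩ Icc 1 n ⊆ (fun m => k * m + h) '' Iic (n / k) := by
    rintro _ ⟨⟨m, rfl⟩, -, hmn⟩
    refine ⟨m, (Nat.le_div_iff_mul_le hk).2 ?_, rfl⟩
    rw [mul_comm]
    omega
  simpa using (ncard_le_ncard hsub ((finite_Iic _).image _)).trans (ncard_image_le (finite_Iic _))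

lemma hasAsymptoticDensity_AP (hk : 0 < k) (h : ℕ) : HasAsymptoticDensity (AP k h) (1 / k) := by
  refine hasAsymptoticDensity_of_abs_sub_le (C := h + 1) fun n => ?_
  have hk' : (1 : ℝ) ≤ k := Nat.one_le_cast.2 hk
  have hupper : ((AP k h ∩ Icc 1 n).ncard : ℝ) ≤ n / k + 1 := by
    grw [← Nat.cast_div_le]
    exact_mod_cast ncard_AP_inter_Icc_le hk h n
  have hlower : (n : ℝ) / k - h - 1 ≤ (AP k h ∩ Icc 1 n).ncard :=
    calc (n : ℝ) / k - h - 1 ≤ n / k - h / k - 1 := by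
          gcongr
          exact div_le_self h.cast_nonneg hk'
      _ = ((n : ℝ) - h) / k - 1 := by rw [sub_div]
      _ ≤ ((n - h : ℕ) : ℝ) / k - 1 := by
          gcongr
          rw [sub_le_iff_le_add]
          exact_mod_cast le_tsub_add
      _ ≤ ((n - h) / k : ℕ) := by
          rw [← Nat.floor_div_eq_div (K := ℝ)]
          exact (Nat.sub_one_lt_floor _).le
      _ ≤ (AP k h ∩ Icc 1 n).ncard := mod_cast div_le_ncard_AP_inter_Icc hk h n
  rw [one_div_mul_eq_div, abs_le]
  constructor <;> linarith [h.cast_nonneg (α := ℝ)]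

lemma exists_inter_AP_eq_AP {A : Set ℕ} (hA : MapsTo (· + k) A A) {h : ℕ} (hlt : h < k)
    (hne : (A ∩ AP k h).Nonempty) : ∃ a, A ∩ AP k h = AP k a := by
  obtain ⟨haA, hah⟩ := Nat.sInf_mem hne
  refine ⟨sInf (A ∩ AP k h), Subset.antisymm (fun x hx => ?_) ?_⟩
  · have hmod : x % k = sInf (A ∩ AP k h) % k :=
      ((mem_AP_iff_mod_eq hlt).1 hx.2).trans ((mem_AP_iff_mod_eq hlt).1 hah).symm
    obtain ⟨m, hm⟩ := (Nat.modEq_iff_dvd' (Nat.sInf_le hx)).1 hmod.symm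
    exact ⟨m, by have := Nat.sInf_le hx; omega⟩
  · rintro _ ⟨m, rfl⟩
    rw [add_comm]
    induction m with
    | zero => exact ⟨haA, hah⟩
    | succ m ih =>
      rw [mul_add_one, ← add_assoc]
      exact ⟨hA ih.1, mapsTo_add_AP dvd_rfl h ih.2⟩

lemma hasAsymptoticDensity_of_mapsTo_add (hk : 0 < k) {A : Set ℕ} (hA : MapsTo (· + k) A A) :
    HasAsymptoticDensity A (rk k A / k) := by
  have hsum : (rk k A / k : ℝ) = ∑ _ ∈ hitResidues k A, (1 / k : ℝ) := by
    rw [Finset.sum_const, card_hitResidues, nsmul_eq_mul, mul_one_div]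
  rw [hsum]
  nth_rw 1 [← iUnion_hitResidues_inter_AP hk A]
  have hdisj : (hitResidues k A : Set ℕ).PairwiseDisjoint fun h => A ∩ AP k h :=
    ((pairwiseDisjoint_AP k).subset fun _ hh => (mem_hitResidues.1 hh).1).mono
      fun _ => inter_subset_right
  refine .biUnion hdisj fun h hh => ?_
  obtain ⟨hlt, hne⟩ := mem_hitResidues.1 hh
  obtain ⟨a, ha⟩ := exists_inter_AP_eq_AP hA hlt hne
  rw [ha]
  exact hasAsymptoticDensity_AP hk a

end Density

section ResidueClosure

variable {k : ℕ}

/-- The union of the residue classes modulo `k` that meet `X`: for `0 < k`, the smallest superset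
of `X` that is a union of residue classes modulo `k`. -/
noncomputable def residueClosure (k : ℕ) (X : Set ℕ) : Set ℕ :=
  ⋃ h ∈ hitResidues k X, AP k h

lemma subset_residueClosure (hk : 0 < k) (X : Set ℕ) : X ⊆ residueClosure k X :=
  (iUnion_hitResidues_inter_AP hk X).symm.subset.trans
    (iUnion₂_mono fun _ _ => inter_subset_right)

lemma isFinUnionAP_residueClosure (hk : 0 < k) (X : Set ℕ) :
    IsFinUnionAP (residueClosure k X) := by
  refine ⟨(hitResidues k X).image fun h => (k, h), ?_, ?_⟩
  · intro p hp
    obtain ⟨h, -, rfl⟩ := Finset.mem_image.1 hp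
    exact hk
  · rw [Finset.set_biUnion_finset_image, residueClosure]

lemma mapsTo_add_residueClosure {l : ℕ} (hkl : k ∣ l) (X : Set ℕ) :
    MapsTo (· + l) (residueClosure k X) (residueClosure k X) :=
  mapsTo_iUnion₂_iUnion₂ fun h _ => mapsTo_add_AP hkl h

lemma rk_residueClosure (hk : 0 < k) (X : Set ℕ) : rk k (residueClosure k X) = rk k X := by
  refine le_antisymm ?_ (rk_mono k (subset_residueClosure hk X))
  rw [← card_hitResidues, ← card_hitResidues]
  refine Finset.card_le_card fun h hh => ?_
  obtain ⟨x, hx, rfl⟩ := (mem_hitResidues_iff_exists_mod_eq hk).1 hh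
  obtain ⟨r, hr, hxr⟩ := mem_iUnion₂.1 hx
  rwa [(mem_AP_iff_mod_eq (mem_hitResidues.1 hr).1).1 hxr]

lemma hasAsymptoticDensity_residueClosure (hk : 0 < k) (X : Set ℕ) :
    HasAsymptoticDensity (residueClosure k X) (rk k X / k) := by
  rw [← rk_residueClosure hk X]
  exact hasAsymptoticDensity_of_mapsTo_add hk (mapsTo_add_residueClosure dvd_rfl X)

lemma rk_div_le_of_dvd {l : ℕ} (hl : 0 < l) (hkl : k ∣ l) (X : Set ℕ) :
    (rk l X / l : ℝ) ≤ rk k X / k := by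
  have hk : 0 < k := Nat.pos_of_dvd_of_pos hkl hl
  calc (rk l X / l : ℝ) ≤ rk l (residueClosure k X) / l := by
        gcongr
        exact rk_mono l (subset_residueClosure hk X)
    _ = rk k X / k := tendsto_nhds_unique
        (hasAsymptoticDensity_of_mapsTo_add hl (mapsTo_add_residueClosure hkl X))
        (hasAsymptoticDensity_residueClosure hk X)

end ResidueClosure

section BuckDensity

variable {k : ℕ}

lemma IsFinUnionAP.exists_mapsTo_add {A : Set ℕ} (hA : IsFinUnionAP A) :
    ∃ k, 0 < k ∧ MapsTo (· + k) A A := by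
  obtain ⟨s, hs, rfl⟩ := hA
  exact ⟨∏ p ∈ s, p.1, Finset.prod_pos hs, mapsTo_iUnion₂_iUnion₂ fun p hp =>
    mapsTo_add_AP (Finset.dvd_prod_of_mem Prod.fst hp) p.2⟩

lemma IsFinUnionAP.exists_upperAsymptoticDensity_eq {A : Set ℕ} (hA : IsFinUnionAP A) :
    ∃ k, 0 < k ∧ upperAsymptoticDensity A = rk k A / k := by
  obtain ⟨k, hk, hAk⟩ := hA.exists_mapsTo_add
  exact ⟨k, hk, (hasAsymptoticDensity_of_mapsTo_add hk hAk).upperAsymptoticDensity_eq⟩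

lemma buckDensity_le_rk_div (hk : 0 < k) (X : Set ℕ) : buckDensity X ≤ rk k X / k := by
  refine csInf_le ⟨0, ?_⟩ ⟨residueClosure k X, isFinUnionAP_residueClosure hk X,
    subset_residueClosure hk X,
    (hasAsymptoticDensity_residueClosure hk X).upperAsymptoticDensity_eq.symm⟩
  rintro _ ⟨A, hA, -, rfl⟩
  obtain ⟨l, -, hl⟩ := hA.exists_upperAsymptoticDensity_eq
  rw [hl]
  positivity

lemma exists_rk_div_lt_of_buckDensity_lt {X : Set ℕ} {c : ℝ} (hc : buckDensity X < c) :
    ∃ k, 0 < k ∧ (rk k X / k : ℝ) < c := by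
  obtain ⟨_, ⟨A, hA, hXA, rfl⟩, hAc⟩ := exists_lt_of_csInf_lt
    (show {d | ∃ A, IsFinUnionAP A ∧ X ⊆ A ∧ d = upperAsymptoticDensity A}.Nonempty from
      ⟨_, residueClosure 1 X, isFinUnionAP_residueClosure one_pos X,
        subset_residueClosure one_pos X, rfl⟩) hc
  obtain ⟨k, hk, hkA⟩ := hA.exists_upperAsymptoticDensity_eq
  refine ⟨k, hk, lt_of_le_of_lt ?_ (hkA ▸ hAc)⟩
  gcongr
  exact rk_mono k hXA

lemma tendsto_rk_div_buckDensity {ι : Type*} {l : Filter ι} {f : ι → ℕ}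
    (hpos : ∀ᶠ i in l, 0 < f i) (hdvd : ∀ k, 0 < k → ∀ᶠ i in l, k ∣ f i) (X : Set ℕ) :
    Tendsto (fun i => (rk (f i) X / f i : ℝ)) l (𝓝 (buckDensity X)) := by
  refine tendsto_order.2 ⟨fun c hc => ?_, fun c hc => ?_⟩
  · filter_upwards [hpos] with i hi using hc.trans_le (buckDensity_le_rk_div hi X)
  · obtain ⟨k, hk, hkc⟩ := exists_rk_div_lt_of_buckDensity_lt hc
    filter_upwards [hpos, hdvd k hk] with i hi hki using (rk_div_le_of_dvd hi hki X).trans_lt hkc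

lemma tendsto_rk_mul_factorial_div {m : ℕ} (hm : 0 < m) (X : Set ℕ) :
    Tendsto (fun n : ℕ => (rk (m * n.factorial) X / (m * n.factorial : ℕ) : ℝ)) atTop
      (𝓝 (buckDensity X)) := by
  refine tendsto_rk_div_buckDensity (.of_forall fun n => Nat.mul_pos hm n.factorial_pos)
    (fun k hk => ?_) X
  filter_upwards [eventually_ge_atTop k] with n hn
  exact (Nat.dvd_factorial hk hn).mul_left m

lemma tendsto_rk_factorial_div (X : Set ℕ) :
    Tendsto (fun n : ℕ => (rk n.factorial X / n.factorial : ℝ)) atTop (𝓝 (buckDensity X)) := by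
  simpa only [one_mul] using tendsto_rk_mul_factorial_div one_pos X

lemma buckDensity_univ : buckDensity univ = 1 := by
  refine tendsto_nhds_unique (tendsto_rk_factorial_div univ) (tendsto_const_nhds.congr fun n => ?_)
  rw [rk_univ, div_self (Nat.cast_ne_zero.2 n.factorial_ne_zero)]

lemma buckDensity_le_one (X : Set ℕ) : buckDensity X ≤ 1 :=
  le_of_tendsto' (tendsto_rk_factorial_div X) fun _ =>
    div_le_one_of_le₀ (Nat.cast_le.2 (rk_le _ X)) (Nat.cast_nonneg _)

lemma buckDensity_union_le (X Y : Set ℕ) :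
    buckDensity (X ∪ Y) ≤ buckDensity X + buckDensity Y := by
  refine le_of_tendsto_of_tendsto' (tendsto_rk_factorial_div (X ∪ Y))
    ((tendsto_rk_factorial_div X).add (tendsto_rk_factorial_div Y)) fun n => ?_
  rw [← add_div]
  gcongr
  exact_mod_cast rk_union_le _ X Y

lemma buckDensity_image_mul {m : ℕ} (hm : 0 < m) (X : Set ℕ) :
    buckDensity ((m * ·) '' X) = buckDensity X / m := by
  refine tendsto_nhds_unique (tendsto_rk_mul_factorial_div hm _)
    (((tendsto_rk_factorial_div X).div_const (m : ℝ)).congr fun n => ?_)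
  rw [rk_mul_image_mul hm n.factorial_pos, div_div, Nat.cast_mul, mul_comm (m : ℝ)]

lemma buckDensity_image_add (X : Set ℕ) (h : ℕ) : buckDensity ((· + h) '' X) = buckDensity X := by
  refine tendsto_nhds_unique (tendsto_rk_factorial_div _)
    ((tendsto_rk_factorial_div X).congr fun n => ?_)
  rw [rk_image_add n.factorial_pos]

theorem isUpperQuasiDensity_buckDensity : IsUpperQuasiDensity buckDensity :=
  ⟨buckDensity_univ, buckDensity_le_one, buckDensity_union_le,
    fun X _ hm => buckDensity_image_mul hm X, buckDensity_image_add⟩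

end BuckDensity

namespace IsUpperQuasiDensity

variable {μ : Set ℕ → ℝ}

lemma nonneg (hμ : IsUpperQuasiDensity μ) (X : Set ℕ) : 0 ≤ μ X := by
  obtain ⟨-, -, hunion, -, -⟩ := hμ
  have hXX : μ X ≤ μ X + μ X := by simpa only [union_self] using hunion X X
  linarith

lemma apply_empty (hμ : IsUpperQuasiDensity μ) : μ ∅ = 0 := by
  obtain ⟨-, -, -, hmul, -⟩ := hμ
  have hhalf : μ ∅ = μ ∅ / 2 := by simpa using hmul ∅ 2 two_pos
  linarith

lemma biUnion_le (hμ : IsUpperQuasiDensity μ) {ι : Type*} (s : Finset ι) (A : ι → Set ℕ) :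
    μ (⋃ i ∈ s, A i) ≤ ∑ i ∈ s, μ (A i) := by
  classical
  induction s using Finset.induction_on with
  | empty => simp [hμ.apply_empty]
  | insert i s hi ih =>
    obtain ⟨-, -, hunion, -, -⟩ := hμ
    rw [Finset.set_biUnion_insert, Finset.sum_insert hi]
    exact (hunion _ _).trans (by gcongr)

lemma inter_AP_le (hμ : IsUpperQuasiDensity μ) {k : ℕ} (hk : 0 < k)
    (X : Set ℕ) (h : ℕ) : μ (X ∩ AP k h) ≤ 1 / k := by
  obtain ⟨-, hle, -, hmul, hadd⟩ := hμ
  have himage : X ∩ AP k h = (· + h) '' ((k * ·) '' ((fun m => k * m + h) ⁻¹' X)) := by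
    rw [image_image, image_preimage_eq_inter_range, AP_eq_range]
  rw [himage, hadd, hmul _ k hk]
  gcongr
  exact hle _

lemma le_rk_div (hμ : IsUpperQuasiDensity μ) {k : ℕ} (hk : 0 < k) (X : Set ℕ) :
    μ X ≤ rk k X / k :=
  calc μ X = μ (⋃ h ∈ hitResidues k X, X ∩ AP k h) := by rw [iUnion_hitResidues_inter_AP hk]
    _ ≤ ∑ h ∈ hitResidues k X, μ (X ∩ AP k h) := hμ.biUnion_le _ _
    _ ≤ ∑ _ ∈ hitResidues k X, (1 / k : ℝ) := Finset.sum_le_sum fun h _ => hμ.inter_AP_le hk X h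
    _ = rk k X / k := by rw [Finset.sum_const, card_hitResidues, nsmul_eq_mul, mul_one_div]

theorem le_buckDensity (hμ : IsUpperQuasiDensity μ) (X : Set ℕ) : μ X ≤ buckDensity X :=
  ge_of_tendsto' (tendsto_rk_factorial_div X) fun n => hμ.le_rk_div n.factorial_pos X

end IsUpperQuasiDensity

/-- A set X ⊆ ℕ is small if and only if its upper Buck density is zero. -/
theorem smallSet_iff_buckDensity_eq_zero (X : Set ℕ) :
    SmallSet X ↔ buckDensity X = 0 :=
  ⟨fun hX => hX _ isUpperQuasiDensity_buckDensity,
    fun hX _ hμ => le_antisymm ((hμ.le_buckDensity X).trans_eq hX) (hμ.nonneg X)⟩
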